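/- There is no positive integer n such that the binomial coefficient C(4n, 2n) is congruent to 2 modulo 5. (In particular, Conjecture 7.1 of Guo and Krattenthaler fails for p = 5, a = 4, b = 2, α = β = 0, r = 2.) -/

import Mathlib

/-!
By Lucas' theorem, the central binomial coefficients are multiplicative along base-`p` digits
modulo a prime `p`. For `p = 5` the digits `0, 1, 2, 3, 4` contribute `1, 2, 1, 0, 0`, and `m` has
the parity of the sum of its digits. So `C(2m, m)` is a square modulo `5` when `m` is even, and `2`
is not a square modulo `5`. Euler's criterion `c ^ 2 = ±1` for a unit `c` of `ZMod 5`, multiplied by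
`c` to allow `c = 0`, makes this an identity that passes from digits to all numbers.
-/

theorem prime_dvd_centralBinom {p n : ℕ} (hp : p.Prime) (hn : n < p) (hpn : p ≤ 2 * n) :
    p ∣ n.centralBinom := by
  rw [Nat.centralBinom_eq_two_mul_choose]
  exact hp.dvd_choose hn (by lia) hpn

theorem centralBinom_modEq_centralBinom_mod_mul_centralBinom_div (p n : ℕ) [Fact p.Prime] :
    n.centralBinom ≡ (n % p).centralBinom * (n / p).centralBinom [MOD p] := by
  have hp : p.Prime := Fact.out
  have hmod : n % p < p := Nat.mod_lt n hp.pos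
  have two_mul_eq : 2 * n = 2 * (n % p) + p * (2 * (n / p)) := by
    linarith [Nat.mod_add_div n p]
  have lucas : n.centralBinom ≡
      ((2 * n) % p).choose (n % p) * ((2 * n) / p).choose (n / p) [MOD p] :=
    Choose.choose_modEq_choose_mod_mul_choose_div_nat
  rcases lt_or_ge (2 * (n % p)) p with no_carry | carry
  · have two_mul_mod : (2 * n) % p = 2 * (n % p) := by
      rw [two_mul_eq, Nat.add_mul_mod_self_left, Nat.mod_eq_of_lt no_carry]
    have two_mul_div : (2 * n) / p = 2 * (n / p) := by
      rw [two_mul_eq, Nat.add_mul_div_left _ _ hp.pos, Nat.div_eq_of_lt no_carry, zero_add]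
    rwa [two_mul_mod, two_mul_div] at lucas
  · have two_mul_mod : (2 * n) % p = 2 * (n % p) - p := by
      rw [two_mul_eq, Nat.add_mul_mod_self_left, Nat.mod_eq_sub_mod carry,
        Nat.mod_eq_of_lt (by lia)]
    have lt_digit : (2 * n) % p < n % p := by lia
    rw [Nat.choose_eq_zero_of_lt lt_digit, zero_mul] at lucas
    exact lucas.trans ((prime_dvd_centralBinom hp hmod carry).mul_right _).modEq_zero_nat.symm

theorem centralBinom_pow_three_zmod_five (m : ℕ) :
    (m.centralBinom : ZMod 5) ^ 3 = (-1) ^ m * m.centralBinom := by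
  have digit : ∀ r < 5, (r.centralBinom : ZMod 5) ^ 3 = (-1) ^ r * r.centralBinom := by decide
  induction m using Nat.strong_induction_on with
  | _ m ih =>
    rcases lt_or_ge m 5 with hm | hm
    · exact digit m hm
    have : Fact (Nat.Prime 5) := ⟨Nat.prime_five⟩
    have lucas : (m.centralBinom : ZMod 5) = (m % 5).centralBinom * (m / 5).centralBinom := by
      exact_mod_cast (ZMod.natCast_eq_natCast_iff _ _ 5).2
        (centralBinom_modEq_centralBinom_mod_mul_centralBinom_div 5 m)
    have sign : (-1 : ZMod 5) ^ m = (-1) ^ (m % 5) * (-1) ^ (m / 5) := by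
      conv_lhs => rw [← Nat.mod_add_div m 5, pow_add, pow_mul,
        Odd.neg_one_pow (by decide : Odd 5)]
    rw [lucas, mul_pow, digit _ (Nat.mod_lt m (by lia)), ih (m / 5) (by lia), sign]
    ring

/-- There is no positive integer `n` such that `C(4n, 2n) ≡ 2 (mod 5)`. -/
theorem stmt_12 : ¬ ∃ n : ℕ, 0 < n ∧ Nat.choose (4 * n) (2 * n) % 5 = 2 := by
  rintro ⟨n, -, residue⟩
  have residue_zmod : ((2 * n).centralBinom : ZMod 5) = (2 : ℕ) := by
    rw [ZMod.natCast_eq_natCast_iff', Nat.centralBinom_eq_two_mul_choose, ← mul_assoc]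
    exact residue
  have cube := centralBinom_pow_three_zmod_five (2 * n)
  rw [residue_zmod, (even_two_mul n).neg_one_pow, one_mul] at cube
  exact absurd cube (by decide)
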